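/- The function h₁(x) = 4x + √π·e^{x²}·(1−2x²)·(1−erf(x)) satisfies, for every real x, the equation h₁''(x) − 2(x + 4x/(1+2x²))·h₁'(x) + 2·h₁(x) = 0, and the function h₂(x) = 2 + 4x² + 4√π·x·e^{x²}·(1−erf(x)) satisfies, for every real x, the equation h₂''(x) − 2(x + 4x/(1+2x²))·h₂'(x) + 4·h₂(x) = 0; i.e., h₁ and h₂ are (non-polynomial) solutions of the X₂^{(1)}-Hermite differential equation with parameters n = 1 and n = 2 respectively. -/

import Mathlib

/-- The error function. -/
noncomputable def erf (x : ℝ) : ℝ :=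
  (2 / Real.sqrt Real.pi) * ∫ t in (0 : ℝ)..x, Real.exp (-t ^ 2)

/-- The non-polynomial solution Ĥ₁. -/
noncomputable def h1 (x : ℝ) : ℝ :=
  4 * x + Real.sqrt Real.pi * Real.exp (x ^ 2) * (1 - 2 * x ^ 2) * (1 - erf x)

/-- The non-polynomial solution Ĥ₂. -/
noncomputable def h2 (x : ℝ) : ℝ :=
  2 + 4 * x ^ 2 + 4 * Real.sqrt Real.pi * x * Real.exp (x ^ 2) * (1 - erf x)

theorem erf_hasDerivAt (x : ℝ) :
    HasDerivAt erf ((2 / Real.sqrt Real.pi) * Real.exp (-x ^ 2)) x := by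
  have hc : Continuous (fun t : ℝ => Real.exp (-t ^ 2)) := by fun_prop
  exact (hc.integral_hasStrictDerivAt 0 x).hasDerivAt.const_mul _

noncomputable def gaux (x : ℝ) : ℝ := Real.sqrt Real.pi * Real.exp (x ^ 2) * (1 - erf x)

theorem gaux_hasDerivAt (x : ℝ) : HasDerivAt gaux (2 * x * gaux x - 2) x := by
  have h1 : HasDerivAt (fun y : ℝ => Real.exp (y ^ 2)) (Real.exp (x ^ 2) * (2 * x)) x := by
    simpa using (hasDerivAt_pow 2 x).exp
  have h := (h1.const_mul (Real.sqrt Real.pi)).mul ((erf_hasDerivAt x).const_sub 1)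
  refine h.congr_deriv ?_
  have hp : Real.sqrt Real.pi ≠ 0 := (Real.sqrt_pos.mpr Real.pi_pos).ne'
  have he : Real.exp (x ^ 2) ≠ 0 := (Real.exp_pos _).ne'
  rw [Real.exp_neg]
  unfold gaux
  field_simp
  ring

theorem sq_hasDerivAt_aux (x : ℝ) : HasDerivAt (fun y : ℝ => y ^ 2) (2 * x) x := by
  simpa using hasDerivAt_pow 2 x

theorem deriv_h1_aux : deriv h1 = fun x => (1 + 2 * x ^ 2) * (2 - 2 * (x * gaux x)) := by
  funext x
  have e : h1 = fun y => 4 * y + (1 - 2 * y ^ 2) * gaux y := by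
    funext y; unfold h1 gaux; ring
  rw [e]
  have h := ((hasDerivAt_id' x).const_mul 4).add
    ((((sq_hasDerivAt_aux x).const_mul 2).const_sub 1).mul (gaux_hasDerivAt x))
  refine (h.congr_deriv ?_).deriv
  ring

theorem deriv_h2_aux : deriv h2 = fun x => 4 * (1 + 2 * x ^ 2) * gaux x := by
  funext x
  have e : h2 = fun y => (2 + 4 * y ^ 2) + 4 * (y * gaux y) := by
    funext y; unfold h2 gaux; ring
  rw [e]
  have h := (((sq_hasDerivAt_aux x).const_mul 4).const_add 2).add
    (((hasDerivAt_id' x).mul (gaux_hasDerivAt x)).const_mul 4)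
  refine (h.congr_deriv ?_).deriv
  ring

theorem stmt4 :
    (∀ x : ℝ,
      deriv (deriv h1) x - 2 * (x + 4 * x / (1 + 2 * x ^ 2)) * deriv h1 x + 2 * h1 x = 0) ∧
    (∀ x : ℝ,
      deriv (deriv h2) x - 2 * (x + 4 * x / (1 + 2 * x ^ 2)) * deriv h2 x + 4 * h2 x = 0) := by
  constructor
  · intro x
    have hx : (1 + 2 * x ^ 2) ≠ 0 := by positivity
    have h := (((sq_hasDerivAt_aux x).const_mul 2).const_add 1).mul
      ((((hasDerivAt_id' x).mul (gaux_hasDerivAt x)).const_mul 2).const_sub 2)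
    have h' := h.deriv
    have e2 : deriv (deriv h1) x = deriv _ x := congrArg (fun f => deriv f x) deriv_h1_aux
    replace h' := e2.trans h'
    have e : h1 x = 4 * x + (1 - 2 * x ^ 2) * gaux x := by unfold h1 gaux; ring
    rw [h', e, deriv_h1_aux]
    simp only [Pi.mul_apply]
    field_simp
    ring
  · intro x
    have hx : (1 + 2 * x ^ 2) ≠ 0 := by positivity
    have h := ((((sq_hasDerivAt_aux x).const_mul 2).const_add 1).const_mul 4).mul
      (gaux_hasDerivAt x)
    have h' := h.deriv
    have e2 : deriv (deriv h2) x = deriv _ x := congrArg (fun f => deriv f x) deriv_h2_aux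
    replace h' := e2.trans h'
    have e : h2 x = (2 + 4 * x ^ 2) + 4 * (x * gaux x) := by unfold h2 gaux; ring
    rw [h', e, deriv_h2_aux]
    field_simp
    ring
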